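/- arXiv:1506.02517 — 3 statements merged into one kernel-verified Lean document; each statement's English description precedes it below -/
import Mathlib

section
/- Let q ≥ 2 and n ≥ 1 be integers, let p be a real number with 1 ≤ p < ∞, let C ⊆ (ℤ/qℤ)^n be a code, and let r be a real number with 0 ≤ 2r < q. Then the balls of radius r in the p-Lee metric centered at distinct points of C are pairwise disjoint if and only if the balls of radius r in the ℓ_p metric centered at distinct points of the Construction A lattice Λ(C) ⊆ ℤ^n are pairwise disjoint. -/
open Finset

/-- The `ℓ_p` distance on `ℤ^n` for a real parameter `p`. -/
noncomputable def dp (n : ℕ) (p : ℝ) (x y : Fin n → ℤ) : ℝ :=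
  (∑ i, (|x i - y i| : ℝ) ^ p) ^ (1 / p)

/-- The Lee distance on `ℤ/qℤ`. -/
def dLee {q : ℕ} (x y : ZMod q) : ℕ := min (x - y).val (y - x).val

/-- The `p`-Lee distance on `(ℤ/qℤ)^n`. -/
noncomputable def dpLee (n q : ℕ) (p : ℝ) (x y : Fin n → ZMod q) : ℝ :=
  (∑ i, (dLee (x i) (y i) : ℝ) ^ p) ^ (1 / p)

/-- The Construction A lattice of a code `C ⊆ (ℤ/qℤ)^n`: the preimage of `C` under
coordinatewise reduction modulo `q`. -/
def constructionA (n q : ℕ) (C : Set (Fin n → ZMod q)) : Set (Fin n → ℤ) :=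
  {x | (fun i => (x i : ZMod q)) ∈ C}

/-!
The `p`-Lee distance is the quotient of the `ℓ_p` distance under reduction modulo `q`: reduction
does not increase distances, and every residue vector has a lift realizing its distance to a given
integer point. Hence a common point of two Lee balls lifts, together with the centers, to a common
point of two `ℓ_p` balls, and common points of `ℓ_p` balls reduce to common points of Lee balls.
Reduction identifies distinct centers only if some coordinates differ by at least `q`, and then
balls of radius `r < q / 2` cannot meet.
-/

section

variable {n q : ℕ} {p : ℝ}

lemma dLee_eq_natAbs_valMinAbs [NeZero q] (x y : ZMod q) :
    dLee x y = (x - y).valMinAbs.natAbs := by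
  rw [dLee, ← neg_sub x y, ZMod.valMinAbs_natAbs_eq_min, ZMod.neg_val]
  split_ifs with h
  · simp only [h, ZMod.val_zero, zero_le, min_eq_left]
  · rfl

lemma dLee_intCast_le_natAbs_sub [NeZero q] (a b : ℤ) :
    dLee (a : ZMod q) (b : ZMod q) ≤ (a - b).natAbs := by
  rw [dLee_eq_natAbs_valMinAbs]
  refine ZMod.natAbs_min_of_le_div_two q _ _ ?_ (ZMod.natAbs_valMinAbs_le _)
  rw [ZMod.coe_valMinAbs, Int.cast_sub]

lemma exists_intCast_eq_and_natAbs_sub_eq_dLee [NeZero q] (a : ℤ) (x : ZMod q) :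
    ∃ b : ℤ, (b : ZMod q) = x ∧ (a - b).natAbs = dLee (a : ZMod q) x := by
  refine ⟨a - ((a : ZMod q) - x).valMinAbs, ?_, ?_⟩
  · rw [Int.cast_sub, ZMod.coe_valMinAbs, sub_sub_cancel]
  · rw [sub_sub_cancel, dLee_eq_natAbs_valMinAbs]

lemma dp_eq_sum_natAbs (x y : Fin n → ℤ) :
    dp n p x y = (∑ i, ((x i - y i).natAbs : ℝ) ^ p) ^ (1 / p) := by
  simp only [dp, Nat.cast_natAbs, Int.cast_abs, Int.cast_sub]

lemma dpLee_intCast_le_dp [NeZero q] (hp : 0 ≤ p) (x y : Fin n → ℤ) :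
    dpLee n q p (fun i => (x i : ZMod q)) (fun i => (y i : ZMod q)) ≤ dp n p x y := by
  rw [dpLee, dp_eq_sum_natAbs]
  gcongr with i
  exact dLee_intCast_le_natAbs_sub (x i) (y i)

lemma exists_intCast_eq_and_dp_eq_dpLee [NeZero q] (p : ℝ) (z : Fin n → ℤ)
    (x : Fin n → ZMod q) :
    ∃ u : Fin n → ℤ, (fun i => (u i : ZMod q)) = x ∧
      dp n p z u = dpLee n q p (fun i => (z i : ZMod q)) x := by
  choose u hux hdist using fun i => exists_intCast_eq_and_natAbs_sub_eq_dLee (z i) (x i)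
  refine ⟨u, funext hux, ?_⟩
  simp only [dp_eq_sum_natAbs, dpLee, hdist]

lemma abs_sub_le_dp (hp : 0 < p) (x y : Fin n → ℤ) (i : Fin n) :
    |(x i : ℝ) - y i| ≤ dp n p x y := by
  rw [dp, one_div, Real.le_rpow_inv_iff_of_pos (abs_nonneg _) (by positivity) hp]
  exact single_le_sum (f := fun j => |(x j : ℝ) - y j| ^ p) (fun j _ => by positivity)
    (mem_univ i)

lemma natCast_le_abs_sub_of_intCast_eq {a b : ℤ} (hab : a ≠ b) (h : (a : ZMod q) = b) :
    (q : ℤ) ≤ |a - b| := by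
  refine Int.le_of_dvd (abs_pos.mpr (sub_ne_zero.mpr hab)) ((dvd_abs _ _).mpr ?_)
  exact (ZMod.intCast_eq_intCast_iff_dvd_sub b a q).mp h.symm

-- The triangle inequality is applied in a single coordinate, because `dp` violates it for `p < 1`.
lemma natCast_le_dp_add_dp_of_intCast_eq (hp : 0 < p) {x y : Fin n → ℤ} (hxy : x ≠ y)
    (hred : (fun i => (x i : ZMod q)) = fun i => (y i : ZMod q)) (z : Fin n → ℤ) :
    (q : ℝ) ≤ dp n p z x + dp n p z y := by
  obtain ⟨i, hi⟩ := Function.ne_iff.mp hxy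
  calc (q : ℝ) ≤ |(x i : ℝ) - y i| := by
        exact_mod_cast natCast_le_abs_sub_of_intCast_eq hi (congrFun hred i)
    _ ≤ |(x i : ℝ) - z i| + |(z i : ℝ) - y i| := abs_sub_le _ _ _
    _ = |(z i : ℝ) - x i| + |(z i : ℝ) - y i| := by rw [abs_sub_comm]
    _ ≤ dp n p z x + dp n p z y := add_le_add (abs_sub_le_dp hp z x i) (abs_sub_le_dp hp z y i)

theorem disjoint_balls_iff_general [NeZero q] (hp : 0 < p) (C : Set (Fin n → ZMod q)) {r : ℝ}
    (hrq : 2 * r < q) :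
    (∀ x ∈ C, ∀ y ∈ C, x ≠ y →
        Disjoint {z : Fin n → ZMod q | dpLee n q p z x ≤ r}
                 {z : Fin n → ZMod q | dpLee n q p z y ≤ r}) ↔
    (∀ x ∈ constructionA n q C, ∀ y ∈ constructionA n q C, x ≠ y →
        Disjoint {z : Fin n → ℤ | dp n p z x ≤ r}
                 {z : Fin n → ℤ | dp n p z y ≤ r}) := by
  simp only [Set.disjoint_left, Set.mem_ofPred_eq]
  constructor
  · intro hLee x hx y hy hxy z hzx hzy
    have hred : (fun i => (x i : ZMod q)) ≠ fun i => (y i : ZMod q) := by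
      intro hcongr
      linarith [natCast_le_dp_add_dp_of_intCast_eq hp hxy hcongr z]
    exact hLee _ hx _ hy hred ((dpLee_intCast_le_dp hp.le z x).trans hzx)
      ((dpLee_intCast_le_dp hp.le z y).trans hzy)
  · intro hlattice x hx y hy hxy z hzx hzy
    obtain ⟨w, rfl⟩ := ZMod.intCast_surjective.comp_left z
    obtain ⟨u, rfl, hu⟩ := exists_intCast_eq_and_dp_eq_dpLee p w x
    obtain ⟨v, rfl, hv⟩ := exists_intCast_eq_and_dp_eq_dpLee p w y
    have huv : u ≠ v := by rintro rfl; exact hxy rfl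
    exact hlattice u hx v hy huv (hu.trans_le hzx) (hv.trans_le hzy)

end

/-- For `0 ≤ 2r < q`, the balls of radius `r` in the `p`-Lee metric centered at distinct
points of a code `C ⊆ (ℤ/qℤ)^n` are pairwise disjoint iff the balls of radius `r` in the
`ℓ_p` metric centered at distinct points of the Construction A lattice `Λ(C) ⊆ ℤ^n` are
pairwise disjoint. -/
theorem disjoint_balls_iff (n q : ℕ) (hn : 1 ≤ n) (hq : 2 ≤ q) (p : ℝ) (hp : 1 ≤ p)
    (C : Set (Fin n → ZMod q)) (r : ℝ) (hr : 0 ≤ r) (hrq : 2 * r < q) :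
    (∀ x ∈ C, ∀ y ∈ C, x ≠ y →
        Disjoint {z : Fin n → ZMod q | dpLee n q p z x ≤ r}
                 {z : Fin n → ZMod q | dpLee n q p z y ≤ r}) ↔
    (∀ x ∈ constructionA n q C, ∀ y ∈ constructionA n q C, x ≠ y →
        Disjoint {z : Fin n → ℤ | dp n p z x ≤ r}
                 {z : Fin n → ℤ | dp n p z y ≤ r}) := by
  have : NeZero q := ⟨by lia⟩
  exact disjoint_balls_iff_general (zero_lt_one.trans_le hp) C hrq
end

section
/- Let n ≥ 2 be an integer and p a real number with 1 < p < ∞. There exists a real number R (depending on n and p) such that for every real r ≥ R, there is no additive subgroup Λ of ℤ^n for which the translates c + B_p^n(r), c ∈ Λ, partition ℤ^n; that is, no linear r-perfect code in ℤ^n in the ℓ_p metric exists for r ≥ R. -/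
open Finset

/-!
If `c ≠ d` are codewords, a lattice point near their midpoint would be covered twice unless
`dist c d > 2 (r - D)`, where `D` bounds the distance of any point to the lattice. Now fix a
codeword `c₀` and a unit vector `u`. A lattice point `z` just outside the ball around `c₀` in
direction `u` is covered by another codeword `c`. The vectors `z - c₀` and `c - z` have norm at most
`r + O(1)`, while their sum has norm at least `2 r - O(1)`, so uniform convexity makes them nearly
equal: `c` lies within `o(r)` of `c₀ + 2 r u`. Applied to two unit vectors at distance `1 / 2`, this
yields distinct codewords at distance `r + o(r)`, which is too close.
-/

open Filter Metric
open scoped ENNReal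

section NormedSpace

variable {E : Type*} [NormedAddCommGroup E] [NormedSpace ℝ E]

theorem uniformConvexSpace_of_properSpace [StrictConvexSpace ℝ E] [ProperSpace E] :
    UniformConvexSpace E where
  uniform_convex ε hε := by
    let K : Set (E × E) := (sphere 0 1 ×ˢ sphere 0 1) ∩ {w | ε ≤ ‖w.1 - w.2‖}
    have hK : IsCompact K := ((isCompact_sphere 0 1).prod (isCompact_sphere 0 1)).inter_right
      (isClosed_le continuous_const (by fun_prop))
    have hpos : ∀ w ∈ K, 0 < 2 - ‖w.1 + w.2‖ := by
      rintro ⟨x, y⟩ ⟨⟨hx, hy⟩, hxy⟩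
      rw [mem_sphere_zero_iff_norm] at hx hy
      have hne : x ≠ y := norm_sub_pos_iff.1 (hε.trans_le hxy)
      have hle : ‖x + y‖ ≤ 2 := (norm_add_le x y).trans_eq (by rw [hx, hy]; norm_num)
      have hne_two : ‖x + y‖ ≠ 2 := fun h ↦
        hne (eq_of_norm_eq_of_norm_add_eq (hx.trans hy.symm) (by rw [h, hx, hy]; norm_num))
      exact sub_pos.2 (hle.lt_of_ne hne_two)
    obtain ⟨δ, hδ, hδK⟩ := hK.exists_forall_le' (by fun_prop) hpos
    refine ⟨δ, hδ, fun x hx y hy hxy ↦ le_sub_comm.1 (hδK (x, y) ⟨⟨?_, ?_⟩, hxy⟩)⟩ <;>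
      simpa

theorem exists_forall_norm_sub_lt_mul_of_lt_norm_add {E : Type*} [SeminormedAddCommGroup E]
    [NormedSpace ℝ E] [UniformConvexSpace E] {ε : ℝ} (hε : 0 < ε) :
    ∃ δ, 0 < δ ∧ ∀ ⦃ρ : ℝ⦄, 0 < ρ → ∀ ⦃x y : E⦄, ‖x‖ ≤ ρ → ‖y‖ ≤ ρ →
      (2 - δ) * ρ < ‖x + y‖ → ‖x - y‖ < ε * ρ := by
  obtain ⟨δ, hδ, h⟩ := exists_forall_closed_ball_dist_add_le_two_sub E hε
  refine ⟨δ, hδ, fun ρ hρ x y hx hy hxy ↦ ?_⟩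
  have norm_scale (w : E) : ‖ρ⁻¹ • w‖ = ‖w‖ / ρ := by
    rw [norm_smul_of_nonneg (inv_nonneg.2 hρ.le), inv_mul_eq_div]
  contrapose! hxy
  have hsum := @h (ρ⁻¹ • x) (by rwa [norm_scale, div_le_one hρ])
    (ρ⁻¹ • y) (by rwa [norm_scale, div_le_one hρ])
    (by rwa [← smul_sub, norm_scale, le_div_iff₀ hρ])
  rwa [← smul_add, norm_scale, div_le_iff₀ hρ] at hsum

theorem strictConvexOn_norm_rpow [StrictConvexSpace ℝ E] {p : ℝ} (hp : 1 < p) :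
    StrictConvexOn ℝ Set.univ fun x : E ↦ ‖x‖ ^ p := by
  refine ⟨convex_univ, fun x _ y _ hxy a b ha hb hab ↦ ?_⟩
  have hp0 : 0 < p := one_pos.trans hp
  by_cases hnorm : ‖x‖ = ‖y‖
  · calc ‖a • x + b • y‖ ^ p < ‖y‖ ^ p := Real.rpow_lt_rpow (norm_nonneg _)
          (norm_combo_lt_of_ne hnorm.le le_rfl hxy ha hb hab) hp0
      _ = a • ‖x‖ ^ p + b • ‖y‖ ^ p := by rw [hnorm, ← add_smul, hab, one_smul]
  · have hle : ‖a • x + b • y‖ ≤ a • ‖x‖ + b • ‖y‖ :=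
      convexOn_univ_norm.2 trivial trivial ha.le hb.le hab
    calc ‖a • x + b • y‖ ^ p ≤ (a • ‖x‖ + b • ‖y‖) ^ p :=
          Real.rpow_le_rpow (norm_nonneg _) hle hp0.le
      _ < a • ‖x‖ ^ p + b • ‖y‖ ^ p :=
          (strictConvexOn_rpow hp).2 (norm_nonneg x) (norm_nonneg y) hnorm ha hb hab

theorem strictConvexSpace_of_strictConvexOn_norm_rpow {p : ℝ} (hp : 0 < p)
    (h : StrictConvexOn ℝ Set.univ fun x : E ↦ ‖x‖ ^ p) : StrictConvexSpace ℝ E := by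
  refine .of_norm_combo_lt_one fun x y hx hy hxy ↦ ⟨1 / 2, 1 / 2, add_halves 1, ?_⟩
  have hlt := h.2 trivial trivial hxy one_half_pos one_half_pos (add_halves (1 : ℝ))
  simp only [hx, hy, Real.one_rpow, smul_eq_mul, mul_one, add_halves] at hlt
  contrapose! hlt
  exact Real.one_le_rpow hlt hp.le

theorem exists_norm_eq_one_norm_sub_eq (hE : 1 < Module.rank ℝ E) {t : ℝ}
    (ht : t ∈ Set.Icc 0 2) : ∃ u v : E, ‖u‖ = 1 ∧ ‖v‖ = 1 ∧ ‖u - v‖ = t := by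
  have : Nontrivial E := rank_pos_iff_nontrivial.1 (one_pos.trans hE)
  obtain ⟨u, hu⟩ := exists_norm_eq E zero_le_one
  have hdiam : ‖u - -u‖ = 2 := by
    rw [sub_neg_eq_add, ← two_smul ℝ u, norm_smul, Real.norm_two, hu, mul_one]
  obtain ⟨v, hv, huv⟩ := (isPreconnected_sphere hE 0 1).intermediate_value
    (f := fun v ↦ ‖u - v‖) (a := u) (b := -u) (by simpa) (by simpa) (by fun_prop)
    (by rwa [sub_self, norm_zero, hdiam])
  exact ⟨u, v, hu, mem_sphere_zero_iff_norm.1 hv, huv⟩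

end NormedSpace

section PiLp

variable {ι : Type*} [Fintype ι] {p : ℝ≥0∞} [Fact (1 ≤ p)]

theorem strictConvexSpace_piLp {β : ι → Type*} [∀ i, NormedAddCommGroup (β i)]
    [∀ i, NormedSpace ℝ (β i)] [∀ i, StrictConvexSpace ℝ (β i)] (hp : 1 < p.toReal) :
    StrictConvexSpace ℝ (PiLp p β) := by
  have hp0 : 0 < p.toReal := one_pos.trans hp
  have norm_rpow (x : PiLp p β) : ‖x‖ ^ p.toReal = ∑ i, ‖x i‖ ^ p.toReal := by
    rw [PiLp.norm_eq_sum hp0, one_div, Real.rpow_inv_rpow (by positivity) hp0.ne']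
  refine strictConvexSpace_of_strictConvexOn_norm_rpow hp0
    ⟨convex_univ, fun x _ y _ hxy a b ha hb hab ↦ ?_⟩
  obtain ⟨j, hj⟩ : ∃ j, x j ≠ y j := by
    contrapose! hxy
    exact PiLp.ext hxy
  simp only [norm_rpow, smul_sum, ← sum_add_distrib]
  exact sum_lt_sum
    (fun i _ ↦ (strictConvexOn_norm_rpow hp).convexOn.2 trivial trivial ha.le hb.le hab)
    ⟨j, mem_univ j, (strictConvexOn_norm_rpow hp).2 trivial trivial hj ha hb hab⟩

/-- The inclusion of the integer lattice `ℤ^ι` into `ℝ^ι` with the `ℓ_p` norm. -/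
noncomputable def intToLp {ι : Type*} (p : ℝ≥0∞) (z : ι → ℤ) : PiLp p fun _ : ι ↦ ℝ :=
  WithLp.toLp p fun i ↦ (z i : ℝ)

variable (p) in
theorem exists_dist_intToLp_le (x : PiLp p fun _ : ι ↦ ℝ) :
    ∃ z : ι → ℤ, dist x (intToLp p z) ≤ (Fintype.card ι : ℝ) ^ (1 / p).toReal := by
  let z : ι → ℤ := fun i ↦ round (x i)
  have hround : dist x.ofLp (fun i ↦ (z i : ℝ)) ≤ 1 :=
    (dist_pi_le_iff one_pos.le).2 fun i ↦
      (abs_sub_round (x i)).trans one_half_lt_one.le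
  refine ⟨z, ((PiLp.lipschitzWith_toLp p fun _ : ι ↦ ℝ).dist_le_mul _ _).trans ?_⟩
  simpa using mul_le_of_le_one_right (by positivity) hround

end PiLp

section PerfectCode

/-- An `r`-perfect code in the point configuration `φ : X → E`: every point of the configuration
is within distance `r` of exactly one codeword. Codewords are indices, so that the code can be
a subset of `ℤ^n` while distances are measured in a normed space. -/
def IsPerfectCode {X E : Type*} [Dist E] (φ : X → E) (r : ℝ) (C : Set X) : Prop :=
  ∀ z, ∃! c, c ∈ C ∧ dist (φ z) (φ c) ≤ r

variable {X E : Type*} [SeminormedAddCommGroup E] [NormedSpace ℝ E] {φ : X → E} {D : ℝ}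

theorem IsPerfectCode.two_mul_lt_dist (hφ : ∀ x, ∃ z, dist x (φ z) ≤ D) {r : ℝ} {C : Set X}
    (hC : IsPerfectCode φ r C) {c d : X} (hc : c ∈ C) (hd : d ∈ C) (hcd : c ≠ d) :
    2 * (r - D) < dist (φ c) (φ d) := by
  by_contra! hle
  obtain ⟨z, hz⟩ := hφ (midpoint ℝ (φ c) (φ d))
  rw [dist_comm] at hz
  have hzc : dist (φ z) (φ c) ≤ r := by
    have hmid := dist_midpoint_left (𝕜 := ℝ) (φ c) (φ d)
    rw [Real.norm_two] at hmid
    linarith [dist_triangle (φ z) (midpoint ℝ (φ c) (φ d)) (φ c)]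
  have hzd : dist (φ z) (φ d) ≤ r := by
    have hmid := dist_midpoint_right (𝕜 := ℝ) (φ c) (φ d)
    rw [Real.norm_two] at hmid
    linarith [dist_triangle (φ z) (midpoint ℝ (φ c) (φ d)) (φ d)]
  exact hcd ((hC z).unique ⟨hc, hzc⟩ ⟨hd, hzd⟩)

theorem IsPerfectCode.exists_mem_of_norm_eq_one (hφ : ∀ x, ∃ z, dist x (φ z) ≤ D) {r : ℝ}
    {C : Set X} (hC : IsPerfectCode φ r C) {c₀ : X} (hc₀ : c₀ ∈ C) {u : E} (hu : ‖u‖ = 1) :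
    ∃ c ∈ C, ∃ z, ‖φ z - φ c₀ - r • u‖ ≤ 2 * D + 1 ∧ ‖φ c - φ z‖ ≤ r ∧
      2 * (r - D) < ‖φ c - φ c₀‖ := by
  obtain ⟨z, hz⟩ := hφ (φ c₀ + (r + D + 1) • u)
  have hD : 0 ≤ D := dist_nonneg.trans hz
  have hz' : ‖φ z - φ c₀ - (r + D + 1) • u‖ ≤ D := by
    rwa [sub_sub, ← dist_eq_norm, dist_comm]
  obtain ⟨c, ⟨hcC, hcz⟩, -⟩ := hC z
  have hfar : r < dist (φ z) (φ c₀) := by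
    have hnorm : r + D + 1 ≤ ‖(r + D + 1) • u‖ := by
      rw [norm_smul, hu, mul_one]
      exact le_abs_self _
    rw [dist_eq_norm]
    linarith [norm_le_norm_add_norm_sub (φ z - φ c₀) ((r + D + 1) • u)]
  have hne : c ≠ c₀ := by
    rintro rfl
    exact hfar.not_ge hcz
  refine ⟨c, hcC, z, ?_, by rwa [← dist_eq_norm, dist_comm], ?_⟩
  · calc ‖φ z - φ c₀ - r • u‖ = ‖(φ z - φ c₀ - (r + D + 1) • u) + (D + 1) • u‖ := by
          congr 1; module
      _ ≤ D + (D + 1) := by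
          refine norm_add_le_of_le hz' ?_
          rw [norm_smul_of_nonneg (by positivity), hu, mul_one]
      _ = 2 * D + 1 := by ring
  · rw [← dist_eq_norm]
    exact hC.two_mul_lt_dist hφ hcC hc₀ hne

theorem eventually_forall_isPerfectCode_exists_mem_norm_sub_le [UniformConvexSpace E]
    (hφ : ∀ x, ∃ z, dist x (φ z) ≤ D) {ε : ℝ} (hε : 0 < ε) :
    ∀ᶠ r : ℝ in atTop, ∀ C, IsPerfectCode φ r C → ∀ c₀ ∈ C, ∀ u : E, ‖u‖ = 1 →
      ∃ c ∈ C, ‖φ c - φ c₀ - (2 * r) • u‖ ≤ ε * r := by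
  obtain ⟨z₀, hz₀⟩ := hφ 0
  have hD : 0 ≤ D := dist_nonneg.trans hz₀
  obtain ⟨δ, hδ, hconv⟩ := exists_forall_norm_sub_lt_mul_of_lt_norm_add (E := E) (half_pos hε)
  filter_upwards [eventually_gt_atTop 0,
    (tendsto_id.const_mul_atTop hδ).eventually_gt_atTop (6 * D + 2),
    (tendsto_id.const_mul_atTop (half_pos hε)).eventually_ge_atTop
      (2 * (2 * D + 1) + ε / 2 * (2 * D + 1))] with r hr hrδ hrε C hC c₀ hc₀ u hu
  simp only [id] at hrδ hrε
  obtain ⟨c, hcC, z, hzu, hcz, hfar⟩ := hC.exists_mem_of_norm_eq_one hφ hc₀ hu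
  have hzc₀ : ‖φ z - φ c₀‖ ≤ r + (2 * D + 1) := by
    have hru : ‖r • u‖ = r := by rw [norm_smul_of_nonneg hr.le, hu, mul_one]
    linarith [norm_le_norm_add_norm_sub' (φ z - φ c₀) (r • u)]
  have hclose : ‖(φ z - φ c₀) - (φ c - φ z)‖ < ε / 2 * (r + (2 * D + 1)) := by
    refine hconv (by positivity) hzc₀ (hcz.trans (by linarith)) ?_
    rw [add_comm (φ z - φ c₀), sub_add_sub_cancel]
    linarith [show 0 ≤ δ * (2 * D + 1) by positivity]
  refine ⟨c, hcC, ?_⟩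
  calc ‖φ c - φ c₀ - (2 * r) • u‖
      = ‖(2 : ℝ) • (φ z - φ c₀ - r • u) - ((φ z - φ c₀) - (φ c - φ z))‖ := by congr 1; module
    _ ≤ 2 * (2 * D + 1) + ε / 2 * (r + (2 * D + 1)) := by
        refine norm_sub_le_of_le ?_ hclose.le
        rw [norm_smul, Real.norm_two]
        gcongr
    _ ≤ ε * r := by linarith

end PerfectCode

theorem eventually_forall_not_isPerfectCode {X E : Type*} [NormedAddCommGroup E] [NormedSpace ℝ E]
    [UniformConvexSpace E] {φ : X → E} {D : ℝ} (hE : 1 < Module.rank ℝ E)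
    (hφ : ∀ x, ∃ z, dist x (φ z) ≤ D) :
    ∀ᶠ r : ℝ in atTop, ∀ C, ¬ IsPerfectCode φ r C := by
  obtain ⟨u, v, hu, hv, huv⟩ :=
    exists_norm_eq_one_norm_sub_eq hE (t := 1 / 2) (by norm_num [Set.mem_Icc])
  filter_upwards [eventually_gt_atTop 0, eventually_gt_atTop (4 * D),
    eventually_forall_isPerfectCode_exists_mem_norm_sub_le hφ (ε := 1 / 8) (by norm_num)]
    with r hr hrD hnear C hC
  obtain ⟨z₀, -⟩ := hφ 0
  obtain ⟨c₀, ⟨hc₀, -⟩, -⟩ := hC z₀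
  obtain ⟨c, hcC, hcu⟩ := hnear C hC c₀ hc₀ u hu
  obtain ⟨d, hdC, hdv⟩ := hnear C hC c₀ hc₀ v hv
  have htarget : ‖(2 * r) • u - (2 * r) • v‖ = r := by
    rw [← smul_sub, norm_smul_of_nonneg (by positivity), huv]
    ring
  have herror : ‖(φ c - φ d) - ((2 * r) • u - (2 * r) • v)‖ ≤ 1 / 4 * r := by
    calc ‖(φ c - φ d) - ((2 * r) • u - (2 * r) • v)‖
        = ‖(φ c - φ c₀ - (2 * r) • u) - (φ d - φ c₀ - (2 * r) • v)‖ := by congr 1; module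
      _ ≤ 1 / 8 * r + 1 / 8 * r := norm_sub_le_of_le hcu hdv
      _ = 1 / 4 * r := by ring
  have hne : c ≠ d := by
    rintro rfl
    rw [sub_self, zero_sub, norm_neg, htarget] at herror
    linarith
  have hfar := hC.two_mul_lt_dist hφ hcC hdC hne
  rw [dist_eq_norm] at hfar
  linarith [norm_le_norm_add_norm_sub' (φ c - φ d) ((2 * r) • u - (2 * r) • v)]

theorem dp_eq_dist_intToLp (n : ℕ) {p : ℝ} (hp : 0 < p) (x y : Fin n → ℤ) :
    dp n p x y = dist (intToLp (.ofReal p) x) (intToLp (.ofReal p) y) := by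
  have hreal : (ENNReal.ofReal p).toReal = p := ENNReal.toReal_ofReal hp.le
  simp only [PiLp.dist_eq_sum (hreal.symm ▸ hp), hreal, intToLp, Real.dist_eq, dp]

theorem no_large_linear_perfect_codes_general (n : ℕ) (hn : 2 ≤ n) (p : ℝ) (hp : 1 < p) :
    ∃ R : ℝ, ∀ r : ℝ, R ≤ r →
      ¬ ∃ C : Set (Fin n → ℤ), ∀ z : Fin n → ℤ, ∃! c, c ∈ C ∧ dp n p z c ≤ r := by
  have hp0 : 0 < p := one_pos.trans hp
  have : Fact (1 ≤ ENNReal.ofReal p) := ⟨ENNReal.one_le_ofReal.2 hp.le⟩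
  let E := PiLp (.ofReal p) fun _ : Fin n ↦ ℝ
  have : StrictConvexSpace ℝ E :=
    strictConvexSpace_piLp ((ENNReal.toReal_ofReal hp0.le).symm ▸ hp)
  have : UniformConvexSpace E := uniformConvexSpace_of_properSpace
  have hE : 1 < Module.rank ℝ E := by
    rw [(WithLp.linearEquiv _ ℝ (Fin n → ℝ)).rank_eq, rank_fin_fun]
    exact_mod_cast hn
  obtain ⟨R, hR⟩ := eventually_atTop.1
    (eventually_forall_not_isPerfectCode hE (exists_dist_intToLp_le (.ofReal p)))
  simp only [dp_eq_dist_intToLp n hp0]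
  exact ⟨R, fun r hr ⟨C, hC⟩ ↦ hR r hr C hC⟩

/-- For `n ≥ 2` and `1 < p < ∞` there is a threshold radius `R` beyond which no linear
`r`-perfect code in `ℤ^n` in the `ℓ_p` metric exists. -/
theorem no_large_linear_perfect_codes (n : ℕ) (hn : 2 ≤ n) (p : ℝ) (hp : 1 < p) :
    ∃ R : ℝ, ∀ r : ℝ, R ≤ r →
      ¬ ∃ Λ : AddSubgroup (Fin n → ℤ),
          ∀ z : Fin n → ℤ, ∃! c, c ∈ Λ ∧ dp n p z c ≤ r := by
  obtain ⟨R, hR⟩ := no_large_linear_perfect_codes_general n hn p hp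
  exact ⟨R, fun r hr ⟨Λ, hΛ⟩ ↦ hR r hr ⟨Λ, hΛ⟩⟩
end

section
/- Let n ≥ 1 be an integer, p a real number with 1 ≤ p < ∞, l = n^{1/p}/2, and r a real number with r > l. Suppose Λ is an additive subgroup of ℤ^n whose translates of B_p^n(r) partition ℤ^n, and let d = d_p(Λ) be its minimum ℓ_p distance. Then the index [ℤ^n : Λ] is finite and equals μ_p(n,r), and the density of the induced superball packing satisfies V_{n,p}·(d/2)^n / [ℤ^n : Λ] ≥ ((r − l)/(r + l))^n. -/
open Finset

/-- `μ_p(n,r)`: the number of integer points in the `ℓ_p` ball of radius `r` in `ℤ^n`. -/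
noncomputable def mup (n : ℕ) (p r : ℝ) : ℕ :=
  Set.ncard {x : Fin n → ℤ | (∑ i, (|x i| : ℝ) ^ p) ^ (1 / p) ≤ r}

/-- `V_{n,p}`: the Lebesgue volume of the unit superball in `ℝ^n`. -/
noncomputable def Vnp (n : ℕ) (p : ℝ) : ℝ :=
  (MeasureTheory.volume {x : Fin n → ℝ | ∑ i, |x i| ^ p ≤ 1}).toReal

/-! Let `N` be a norm on `ℝ^ι` (a seminorm whose unit ball has finite volume) which is at most `l`
on the cube `[-1/2, 1/2]^ι`, so that coordinatewise rounding moves a vector by at most `l`.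
Rounding the midpoint of two codewords `x` and `y` gives a lattice point at distance at most
`N (x - y) / 2 + l` from both; in a perfect code this exceeds `r`, so `r - l < d / 2`. The lattice
points within `r` of the origin form a transversal of the code, so the index is their number,
which is the volume of the unit cubes centred at them. These cubes lie in the real ball of radius
`r + l`, so the index is at most `(r + l)^n` times the volume of the unit ball. -/

open MeasureTheory Module
open scoped Pointwise

section CoordinatewiseRound

variable {ι : Type*}

/-- Rounding every coordinate to the nearest integer; the fibres are the half-open unit cubes
centred at the lattice points. -/
noncomputable def coordinatewiseRound (x : ι → ℝ) : ι → ℤ := fun i ↦ round (x i)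

theorem coordinatewiseRound_preimage_singleton (z : ι → ℤ) :
    coordinatewiseRound ⁻¹' {z} =
      Set.univ.pi fun i ↦ Set.Ico ((z i : ℝ) - 1 / 2) ((z i : ℝ) + 1 / 2) := by
  ext x
  simp only [Set.mem_preimage, Set.mem_singleton_iff, funext_iff, coordinatewiseRound,
    round_eq_iff, Set.mem_univ_pi]

variable [Fintype ι]

theorem norm_sub_coordinatewiseRound_le (x : ι → ℝ) :
    ‖x - fun i ↦ (coordinatewiseRound x i : ℝ)‖ ≤ 1 / 2 :=
  (pi_norm_le_iff_of_nonneg (by norm_num)).mpr fun i ↦ abs_sub_round (x i)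

theorem measurePreserving_coordinatewiseRound :
    MeasurePreserving (coordinatewiseRound (ι := ι)) volume Measure.count := by
  have measurableSet_fibre (z : ι → ℤ) : MeasurableSet (coordinatewiseRound ⁻¹' {z}) := by
    rw [coordinatewiseRound_preimage_singleton]
    exact MeasurableSet.univ_pi fun _ ↦ measurableSet_Ico
  have measurable_round := measurable_to_countable' measurableSet_fibre
  refine ⟨measurable_round, Measure.ext_of_singleton fun z ↦ ?_⟩
  rw [Measure.map_apply measurable_round (measurableSet_singleton z), Measure.count_singleton,
    coordinatewiseRound_preimage_singleton, Real.volume_pi_Ico]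
  exact Finset.prod_eq_one fun i _ ↦ ENNReal.ofReal_eq_one.mpr (by ring)

end CoordinatewiseRound

theorem addHaar_seminorm_closedBall {E : Type*} [NormedAddCommGroup E] [NormedSpace ℝ E]
    [FiniteDimensional ℝ E] [MeasurableSpace E] [BorelSpace E] (μ : Measure E) [μ.IsAddHaarMeasure]
    (N : Seminorm ℝ E) {R : ℝ} (hR : 0 < R) :
    μ (N.closedBall 0 R) = ENNReal.ofReal (R ^ finrank ℝ E) * μ (N.closedBall 0 1) := by
  have hsmul : R • N.closedBall 0 1 = N.closedBall 0 R := by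
    rw [Seminorm.smul_closedBall_zero (norm_pos_iff.mpr hR.ne'), Real.norm_of_nonneg hR.le, mul_one]
  rw [← hsmul, Measure.addHaar_smul_of_nonneg μ hR.le]

section LatticeBall

variable {ι : Type*} {N : Seminorm ℝ (ι → ℝ)} {l r : ℝ}

/-- The integer points of the closed ball of radius `r` about the origin, for a seminorm on `ℝ^ι`.
Its translates by a code `C` tile `ℤ^ι` when `AddSubgroup.IsComplement (latticeBall N r) C`. -/
def latticeBall (N : Seminorm ℝ (ι → ℝ)) (r : ℝ) : Set (ι → ℤ) :=
  {z | N (fun i ↦ (z i : ℝ)) ≤ r}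

theorem zero_mem_latticeBall (hr : 0 ≤ r) : 0 ∈ latticeBall N r := by
  have hzero : (fun i ↦ ((0 : ι → ℤ) i : ℝ)) = 0 := funext fun _ ↦ Int.cast_zero
  simpa only [latticeBall, Set.mem_ofPred_eq, hzero, map_zero] using hr

variable [Fintype ι]

theorem encard_latticeBall_le_volume (hl : ∀ x, ‖x‖ ≤ 1 / 2 → N x ≤ l) (r : ℝ) :
    ((latticeBall N r).encard : ENNReal) ≤ volume (N.closedBall 0 (r + l)) := by
  have hsub : coordinatewiseRound ⁻¹' latticeBall N r ⊆ N.closedBall 0 (r + l) := by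
    intro x hx
    rw [Seminorm.mem_closedBall_zero]
    calc N x = N ((fun i ↦ (coordinatewiseRound x i : ℝ)) +
            (x - fun i ↦ (coordinatewiseRound x i : ℝ))) := by rw [add_sub_cancel]
      _ ≤ r + l := (map_add_le_add N _ _).trans
          (add_le_add hx (hl _ (norm_sub_coordinatewiseRound_le x)))
  have hmeas := (latticeBall N r).to_countable.measurableSet
  calc ((latticeBall N r).encard : ENNReal)
      = volume (coordinatewiseRound ⁻¹' latticeBall N r) := by
        rw [measurePreserving_coordinatewiseRound.measure_preimage hmeas.nullMeasurableSet,
          Measure.count_apply hmeas]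
    _ ≤ volume (N.closedBall 0 (r + l)) := measure_mono hsub

theorem volume_seminorm_closedBall_ne_top (hN : volume (N.closedBall 0 1) ≠ ⊤) {R : ℝ}
    (hR : 0 < R) : volume (N.closedBall 0 R) ≠ ⊤ := by
  rw [addHaar_seminorm_closedBall volume N hR]
  exact ENNReal.mul_ne_top ENNReal.ofReal_ne_top hN

theorem finite_latticeBall (hN : volume (N.closedBall 0 1) ≠ ⊤)
    (hl : ∀ x, ‖x‖ ≤ 1 / 2 → N x ≤ l) (hrl : 0 < r + l) : (latticeBall N r).Finite := by
  have hlt := (encard_latticeBall_le_volume hl r).trans_lt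
    (volume_seminorm_closedBall_ne_top hN hrl).lt_top
  exact Set.encard_lt_top_iff.mp (ENat.toENNReal_lt_top.mp hlt)

theorem ncard_latticeBall_le (hN : volume (N.closedBall 0 1) ≠ ⊤)
    (hl : ∀ x, ‖x‖ ≤ 1 / 2 → N x ≤ l) (hrl : 0 < r + l) :
    ((latticeBall N r).ncard : ℝ) ≤
      (r + l) ^ Fintype.card ι * volume.real (N.closedBall 0 1) := by
  have hreal := ENNReal.toReal_mono (volume_seminorm_closedBall_ne_top hN hrl)
    (encard_latticeBall_le_volume hl r)
  rwa [← (finite_latticeBall hN hl hrl).cast_ncard_eq, ENat.toENNReal_coe, ENNReal.toReal_natCast,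
    addHaar_seminorm_closedBall volume N hrl, ENNReal.toReal_mul,
    ENNReal.toReal_ofReal (by positivity), finrank_fintype_fun_eq_card] at hreal

theorem exists_sub_mem_latticeBall (hl : ∀ x, ‖x‖ ≤ 1 / 2 → N x ≤ l) {x y : ι → ℤ}
    (hxy : N (fun i ↦ ((x - y) i : ℝ)) / 2 + l ≤ r) :
    ∃ z, z - x ∈ latticeBall N r ∧ z - y ∈ latticeBall N r := by
  set midpoint : ι → ℝ := fun i ↦ ((x i : ℝ) + y i) / 2
  set z := coordinatewiseRound midpoint
  set err : ι → ℝ := midpoint - fun i ↦ (z i : ℝ)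
  set halfDiff : ι → ℝ := (1 / 2 : ℝ) • fun i ↦ ((x - y) i : ℝ)
  have herr : N err ≤ l := hl err (norm_sub_coordinatewiseRound_le midpoint)
  have hhalfDiff : N halfDiff = N (fun i ↦ ((x - y) i : ℝ)) / 2 := by
    rw [map_smul_eq_mul, Real.norm_of_nonneg (by norm_num)]
    ring
  have hzx : (fun i ↦ ((z - x) i : ℝ)) = -(halfDiff + err) := by
    ext i
    simp only [Pi.sub_apply, Int.cast_sub, Pi.neg_apply, Pi.add_apply, Pi.smul_apply,
      smul_eq_mul, halfDiff, err, midpoint]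
    ring
  have hzy : (fun i ↦ ((z - y) i : ℝ)) = halfDiff - err := by
    ext i
    simp only [Pi.sub_apply, Int.cast_sub, Pi.smul_apply, smul_eq_mul, halfDiff, err, midpoint]
    ring
  refine ⟨z, ?_, ?_⟩
  · rw [latticeBall, Set.mem_ofPred_eq, hzx, map_neg_eq_map]
    linarith [map_add_le_add N halfDiff err]
  · rw [latticeBall, Set.mem_ofPred_eq, hzy]
    linarith [map_sub_le_add N halfDiff err]

theorem sub_lt_half_of_isComplement_latticeBall {C : Set (ι → ℤ)}
    (hl : ∀ x, ‖x‖ ≤ 1 / 2 → N x ≤ l) (hC : AddSubgroup.IsComplement (latticeBall N r) C)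
    {x y : ι → ℤ} (hx : x ∈ C) (hy : y ∈ C) (hxy : x ≠ y) :
    r - l < N (fun i ↦ ((x - y) i : ℝ)) / 2 := by
  by_contra! hle
  obtain ⟨z, hzx, hzy⟩ := exists_sub_mem_latticeBall (x := x) (y := y) (r := r) hl (by linarith)
  have heq := (AddSubgroup.isComplement_iff_existsUnique_add_neg_mem.mp hC z).unique
    (y₁ := ⟨x, hx⟩) (y₂ := ⟨y, hy⟩) (sub_eq_add_neg z x ▸ hzx) (sub_eq_add_neg z y ▸ hzy)
  exact hxy (congrArg Subtype.val heq)

theorem perfect_code_density_bound_general (hN : volume (N.closedBall 0 1) ≠ ⊤)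
    (hl : ∀ x, ‖x‖ ≤ 1 / 2 → N x ≤ l) (hr : l < r) (Λ : AddSubgroup (ι → ℤ))
    (hΛ : AddSubgroup.IsComplement (latticeBall N r) (Λ : Set (ι → ℤ))) {d : ℝ}
    (hd : IsLeast {e : ℝ | ∃ x ∈ Λ, x ≠ 0 ∧ e = N (fun i ↦ (x i : ℝ))} d) :
    Λ.index ≠ 0 ∧ Λ.index = (latticeBall N r).ncard ∧
    ((r - l) / (r + l)) ^ Fintype.card ι ≤
      volume.real (N.closedBall 0 1) * (d / 2) ^ Fintype.card ι / (Λ.index : ℝ) := by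
  have hl0 : 0 ≤ l := (apply_nonneg N 0).trans (hl 0 (by simp))
  have hrl : 0 < r + l := by linarith
  have hindex : (latticeBall N r).ncard = Λ.index := hΛ.ncard_left
  have hindex_pos : 0 < Λ.index := hindex ▸ (Set.ncard_pos (finite_latticeBall hN hl hrl)).mpr
    ⟨0, zero_mem_latticeBall (hl0.trans hr.le)⟩
  have hcard := hindex ▸ ncard_latticeBall_le hN hl hrl
  obtain ⟨x, hx, hx0, rfl⟩ := hd.1
  have hdist := sub_lt_half_of_isComplement_latticeBall hl hΛ hx Λ.zero_mem hx0
  rw [sub_zero] at hdist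
  have hpow := pow_le_pow_left₀ (sub_nonneg.mpr hr.le) hdist.le (Fintype.card ι)
  refine ⟨hindex_pos.ne', hindex.symm, ?_⟩
  rw [div_pow, div_le_div_iff₀ (by positivity) (by positivity)]
  calc (r - l) ^ Fintype.card ι * Λ.index
      ≤ (N (fun i ↦ (x i : ℝ)) / 2) ^ Fintype.card ι *
          ((r + l) ^ Fintype.card ι * volume.real (N.closedBall 0 1)) := by gcongr
    _ = volume.real (N.closedBall 0 1) * (N (fun i ↦ (x i : ℝ)) / 2) ^ Fintype.card ι *
          (r + l) ^ Fintype.card ι := by ring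

end LatticeBall

section LpSeminorm

variable {ι : Type*} [Fintype ι]

/-- The `ℓ_p` norm on `ℝ^ι`, as a seminorm on the function type so that it can be used together with
the Lebesgue measure of `ι → ℝ`. -/
noncomputable def lpSeminorm (ι : Type*) [Fintype ι] (p : ENNReal) [Fact (1 ≤ p)] :
    Seminorm ℝ (ι → ℝ) :=
  (normSeminorm ℝ (PiLp p fun _ : ι ↦ ℝ)).comp
    (WithLp.linearEquiv p ℝ (ι → ℝ)).symm.toLinearMap

variable (p : ENNReal) [Fact (1 ≤ p)]

theorem lpSeminorm_apply (x : ι → ℝ) : lpSeminorm ι p x = ‖WithLp.toLp p x‖ := rfl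

theorem lpSeminorm_eq_sum (hp : p ≠ ⊤) (x : ι → ℝ) :
    lpSeminorm ι p x = (∑ i, |x i| ^ p.toReal) ^ (1 / p.toReal) :=
  PiLp.norm_eq_sum (ENNReal.toReal_pos (zero_lt_one.trans_le Fact.out).ne' hp) _

theorem norm_le_lpSeminorm (x : ι → ℝ) : ‖x‖ ≤ lpSeminorm ι p x :=
  (pi_norm_le_iff_of_nonneg (apply_nonneg _ x)).mpr (PiLp.norm_apply_le (WithLp.toLp p x))

theorem lpSeminorm_le_card_rpow_mul_norm (x : ι → ℝ) :
    lpSeminorm ι p x ≤ (Fintype.card ι : ℝ) ^ (1 / p.toReal) * ‖x‖ := by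
  simpa [lpSeminorm_apply] using (PiLp.lipschitzWith_toLp p fun _ : ι ↦ ℝ).dist_le_mul x 0

theorem lpSeminorm_le_card_rpow_div_two {x : ι → ℝ} (hx : ‖x‖ ≤ 1 / 2) :
    lpSeminorm ι p x ≤ (Fintype.card ι : ℝ) ^ (1 / p.toReal) / 2 :=
  calc lpSeminorm ι p x ≤ (Fintype.card ι : ℝ) ^ (1 / p.toReal) * ‖x‖ :=
        lpSeminorm_le_card_rpow_mul_norm p x
    _ ≤ (Fintype.card ι : ℝ) ^ (1 / p.toReal) * (1 / 2) := by gcongr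
    _ = (Fintype.card ι : ℝ) ^ (1 / p.toReal) / 2 := by ring

theorem volume_lpSeminorm_closedBall_ne_top (R : ℝ) :
    volume ((lpSeminorm ι p).closedBall 0 R) ≠ ⊤ := by
  have hsub : (lpSeminorm ι p).closedBall 0 R ⊆ Metric.closedBall 0 R := fun x hx ↦
    mem_closedBall_zero_iff.mpr
      ((norm_le_lpSeminorm p x).trans ((Seminorm.mem_closedBall_zero _).mp hx))
  exact ((measure_mono hsub).trans_lt measure_closedBall_lt_top).ne

end LpSeminorm

section FiniteExponent

variable {n : ℕ} {p : ENNReal} [Fact (1 ≤ p)]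

theorem lpSeminorm_sub_eq_dp (hp : p ≠ ⊤) (x y : Fin n → ℤ) :
    lpSeminorm (Fin n) p (fun i ↦ ((x - y) i : ℝ)) = dp n p.toReal x y := by
  simp only [lpSeminorm_eq_sum p hp, dp, Pi.sub_apply, Int.cast_sub]

theorem ncard_latticeBall_eq_mup (hp : p ≠ ⊤) (r : ℝ) :
    (latticeBall (lpSeminorm (Fin n) p) r).ncard = mup n p.toReal r := by
  simp only [latticeBall, mup, lpSeminorm_eq_sum p hp]

theorem volume_real_lpSeminorm_closedBall_eq_Vnp (hp : p ≠ ⊤) :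
    volume.real ((lpSeminorm (Fin n) p).closedBall 0 1) = Vnp n p.toReal := by
  have hpos : 0 < p.toReal := ENNReal.toReal_pos (zero_lt_one.trans_le Fact.out).ne' hp
  have hball : (lpSeminorm (Fin n) p).closedBall 0 1 = {x | ∑ i, |x i| ^ p.toReal ≤ 1} := by
    ext x
    rw [Seminorm.mem_closedBall_zero, lpSeminorm_eq_sum p hp, one_div,
      Real.rpow_inv_le_iff_of_pos (by positivity) zero_le_one hpos, Real.one_rpow,
      Set.mem_ofPred_eq]
  rw [hball, Vnp, Measure.real]

theorem isComplement_latticeBall_lpSeminorm_iff (hp : p ≠ ⊤) {r : ℝ} {C : Set (Fin n → ℤ)} :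
    AddSubgroup.IsComplement (latticeBall (lpSeminorm (Fin n) p) r) C ↔
      ∀ z, ∃! c, c ∈ C ∧ dp n p.toReal z c ≤ r := by
  have hmem (z c : Fin n → ℤ) :
      z + -c ∈ latticeBall (lpSeminorm (Fin n) p) r ↔ dp n p.toReal z c ≤ r := by
    rw [← sub_eq_add_neg, latticeBall, Set.mem_ofPred_eq, lpSeminorm_sub_eq_dp hp]
  simp only [AddSubgroup.isComplement_iff_existsUnique_add_neg_mem, hmem]
  refine forall_congr' fun z ↦ ?_
  simp [ExistsUnique, and_assoc, and_left_comm]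

end FiniteExponent

/-- If `Λ ⊆ ℤ^n` is a linear `r`-perfect code in the `ℓ_p` metric with `r > l = n^{1/p}/2`
and minimum `ℓ_p` distance `d`, then the index `[ℤ^n : Λ]` is finite and equals `μ_p(n,r)`,
and the density of the induced superball packing satisfies
`V_{n,p}·(d/2)^n / [ℤ^n : Λ] ≥ ((r − l)/(r + l))^n`. -/
theorem perfect_code_density_bound (n : ℕ) (hn : 1 ≤ n) (p : ℝ) (hp : 1 ≤ p) (r : ℝ)
    (hr : (n : ℝ) ^ (1 / p) / 2 < r)
    (Λ : AddSubgroup (Fin n → ℤ))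
    (hperf : ∀ z : Fin n → ℤ, ∃! c, c ∈ Λ ∧ dp n p z c ≤ r)
    (d : ℝ) (hd : IsLeast {e : ℝ | ∃ x ∈ Λ, x ≠ 0 ∧ e = dp n p x 0} d) :
    Λ.index ≠ 0 ∧ Λ.index = mup n p r ∧
    ((r - (n : ℝ) ^ (1 / p) / 2) / (r + (n : ℝ) ^ (1 / p) / 2)) ^ n ≤
      Vnp n p * (d / 2) ^ n / (Λ.index : ℝ) := by
  obtain ⟨q, hq, rfl⟩ : ∃ q : ENNReal, q ≠ ⊤ ∧ q.toReal = p :=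
    ⟨ENNReal.ofReal p, ENNReal.ofReal_ne_top, ENNReal.toReal_ofReal (zero_le_one.trans hp)⟩
  have : Fact (1 ≤ q) := ⟨ENNReal.ofReal_one ▸ (ENNReal.ofReal_le_iff_le_toReal hq).mpr hp⟩
  simpa only [ncard_latticeBall_eq_mup hq, volume_real_lpSeminorm_closedBall_eq_Vnp hq,
    Fintype.card_fin] using perfect_code_density_bound_general
      (volume_lpSeminorm_closedBall_ne_top q 1) (fun _ ↦ lpSeminorm_le_card_rpow_div_two q)
      (by simpa only [Fintype.card_fin] using hr) Λ
      ((isComplement_latticeBall_lpSeminorm_iff hq).mpr hperf)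
      (by simpa only [← lpSeminorm_sub_eq_dp hq, sub_zero] using hd)
end
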